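/- The abelian group 𝕃 has rank one, i.e. the ℚ-vector space ℚ ⊗_ℤ 𝕃 is one-dimensional; moreover 𝕃 has no nonzero torsion elements if and only if the integers p_1,…,p_n are pairwise coprime. -/

import Mathlib

open scoped TensorProduct

/-- The subgroup of relations `p i • x⃗_i − c⃗` inside the free abelian group
`(Fin n → ℤ) × ℤ` on the generators `x⃗_1, …, x⃗_n, c⃗`. -/
def GLrels (n : ℕ) (p : Fin n → ℕ) : AddSubgroup ((Fin n → ℤ) × ℤ) :=
  AddSubgroup.closure (Set.range fun i : Fin n => ((Pi.single i (p i : ℤ), -1) : (Fin n → ℤ) × ℤ))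

/-- The grading group `𝕃 = ⟨x⃗_1, …, x⃗_n, c⃗⟩ / ⟨p_i x⃗_i − c⃗⟩`. -/
abbrev GLgroup (n : ℕ) (p : Fin n → ℕ) : Type :=
  ((Fin n → ℤ) × ℤ) ⧸ GLrels n p

/-! The degree map `𝕃 → ℚ`, `x⃗_i ↦ 1 / p_i`, `c⃗ ↦ 1`, has the torsion subgroup as its kernel.
Since it is nonzero and `ℚ` has rank one over `ℤ`, so has `𝕃`; moreover `𝕃` is torsion-free exactly
when the degree is injective. If the `p_i` are pairwise coprime, then `∑ v_i / p_i ∈ ℤ` forces every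
`v_i / p_i` to be an integer, which puts an element of degree zero into the relations. Conversely,
with `g = gcd (p_i, p_j)`, the elements `(p_i / g) x⃗_i` and `(p_j / g) x⃗_j` have the same degree
`1 / g`, but they agree in `𝕃` only if `g = 1`. -/

section RankOne

variable {R M K : Type*} [CommRing R] [Field K] [Algebra R K] [IsFractionRing R K]
  [AddCommGroup M] [Module R M]

theorem rank_submodule_eq_one_of_isFractionRing {N : Submodule R K} (hN : N ≠ ⊥) :
    Module.rank R N = 1 := by
  have : IsDomain R := (FaithfulSMul.algebraMap_injective R K).isDomain (algebraMap R K)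
  have : Module.IsTorsionFree R K := Module.isTorsionFree_iff_faithfulSMul.2 inferInstance
  have : Nontrivial N := Submodule.nontrivial_iff_ne_bot.2 hN
  refine le_antisymm ?_ (Cardinal.one_le_iff_pos.2 rank_pos)
  calc Module.rank R N ≤ Module.rank R K := N.rank_le
    _ = Module.rank K K := (IsFractionRing.rank_right_eq R K K).symm
    _ = 1 := Module.rank_self K

theorem rank_eq_one_of_ker_le_torsion {φ : M →ₗ[R] K} (hφ : φ ≠ 0)
    (hker : φ.ker ≤ Submodule.torsion R M) : Module.rank R M = 1 := by
  have hrange : Module.rank R φ.range = 1 :=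
    rank_submodule_eq_one_of_isFractionRing (mt LinearMap.range_eq_bot.1 hφ)
  have hlift := φ.quotKerEquivRange.lift_rank_eq
  rwa [hrange, Cardinal.lift_one, Cardinal.lift_eq_one,
    rank_quotient_eq_of_le_torsion hker] at hlift

end RankOne

section SumOfFractions

variable {R K ι : Type*} [CommRing R] [Field K] [Algebra R K] [FaithfulSMul R K]
  {s : Finset ι} {v p : ι → R}

theorem isInteger_prod_mul_sum_div (hp : ∀ i ∈ s, p i ≠ 0) :
    IsLocalization.IsInteger R
      (algebraMap R K (∏ i ∈ s, p i) * ∑ i ∈ s, algebraMap R K (v i) / algebraMap R K (p i)) := by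
  classical
  rw [Finset.mul_sum]
  refine Subsemiring.sum_mem _ fun i hi => ⟨v i * ∏ j ∈ s.erase i, p j, ?_⟩
  have hpi : algebraMap R K (p i) ≠ 0 := by simpa using hp i hi
  rw [← Finset.mul_prod_erase s p hi, map_mul, map_mul]
  field_simp

theorem dvd_of_isInteger_sum_div (hp : ∀ j ∈ s, p j ≠ 0) {i : ι} (hi : i ∈ s)
    (hcoprime : ∀ j ∈ s, i ≠ j → IsCoprime (p i) (p j))
    (hsum : IsLocalization.IsInteger R (∑ j ∈ s, algebraMap R K (v j) / algebraMap R K (p j))) :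
    p i ∣ v i := by
  classical
  have hcop : IsCoprime (p i) (∏ j ∈ s.erase i, p j) := IsCoprime.prod_right fun j hj =>
    hcoprime j (Finset.mem_of_mem_erase hj) (Finset.ne_of_mem_erase hj).symm
  obtain ⟨c, hc⟩ := hsum
  obtain ⟨b, hb⟩ := isInteger_prod_mul_sum_div (K := K) (s := s.erase i) (v := v) (p := p)
    fun j hj => hp j (Finset.mem_of_mem_erase hj)
  -- Multiplied by the other denominators, every summand except the `i`-th becomes integral.
  refine hcop.dvd_of_dvd_mul_left ⟨(∏ j ∈ s.erase i, p j) * c - b, ?_⟩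
  apply FaithfulSMul.algebraMap_injective R K
  have hpi : algebraMap R K (p i) ≠ 0 := by simpa using hp i hi
  rw [← Finset.add_sum_erase s _ hi] at hc
  simp only [map_mul, map_sub, hb, hc]
  field_simp
  ring

end SumOfFractions

/-- The degree on the free abelian group with generators `x⃗_i` (for `i : ι`) and `c⃗`, sending
`x⃗_i` to `1 / p i` (which is `0` if `p i = 0`) and `c⃗` to `1`; it induces the degree on `𝕃`. -/
def freeDegree {ι : Type*} [Fintype ι] (p : ι → ℕ) : (ι → ℤ) × ℤ →+ ℚ where
  toFun w := ∑ i, (w.1 i : ℚ) / p i + w.2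
  map_zero' := by simp
  map_add' w w' := by
    simp only [Prod.fst_add, Prod.snd_add, Pi.add_apply, Int.cast_add, add_div,
      Finset.sum_add_distrib]
    ring

theorem freeDegree_apply {ι : Type*} [Fintype ι] (p : ι → ℕ) (w : (ι → ℤ) × ℤ) :
    freeDegree p w = ∑ i, (w.1 i : ℚ) / p i + w.2 :=
  rfl

theorem freeDegree_single {ι : Type*} [Fintype ι] [DecidableEq ι] (p : ι → ℕ) (i : ι) (a c : ℤ) :
    freeDegree p (Pi.single i a, c) = a / p i + c := by
  rw [freeDegree_apply, Fintype.sum_eq_single i fun j hj => by simp [hj]]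
  dsimp only
  rw [Pi.single_eq_same]

namespace GLrels

variable {n : ℕ} {p : Fin n → ℕ}

theorem mem_iff_exists {w : (Fin n → ℤ) × ℤ} :
    w ∈ GLrels n p ↔ ∃ k : Fin n → ℤ, (∀ i, w.1 i = p i * k i) ∧ w.2 = -∑ i, k i := by
  rw [GLrels, AddSubgroup.mem_closure_range_iff_of_fintype]
  simp [Prod.ext_iff, funext_iff, Prod.fst_sum, Prod.snd_sum, Finset.sum_apply, Pi.single_apply,
    mul_comm]

theorem mem_iff_freeDegree_eq_zero_and_dvd (hp : ∀ i, 0 < p i) {w : (Fin n → ℤ) × ℤ} :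
    w ∈ GLrels n p ↔ freeDegree p w = 0 ∧ ∀ i, (p i : ℤ) ∣ w.1 i := by
  have hdegree (k : Fin n → ℤ) (hk : ∀ i, w.1 i = p i * k i) :
      freeDegree p w = ((∑ i, k i + w.2 : ℤ) : ℚ) := by
    have hdiv (i : Fin n) : (w.1 i : ℚ) / p i = k i := by
      rw [hk, Int.cast_mul, Int.cast_natCast,
        mul_div_cancel_left₀ _ (Nat.cast_ne_zero.2 (hp i).ne')]
    simp [freeDegree_apply, hdiv]
  rw [mem_iff_exists]
  constructor
  · rintro ⟨k, hk, hc⟩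
    exact ⟨by rw [hdegree k hk, hc, add_neg_cancel, Int.cast_zero], fun i => ⟨k i, hk i⟩⟩
  · rintro ⟨hzero, hdvd⟩
    choose k hk using hdvd
    rw [hdegree k hk, Int.cast_eq_zero] at hzero
    exact ⟨k, hk, eq_neg_of_add_eq_zero_right hzero⟩

theorem prod_nsmul_mem (hp : ∀ i, 0 < p i) {w : (Fin n → ℤ) × ℤ} (hw : freeDegree p w = 0) :
    (∏ i, p i) • w ∈ GLrels n p := by
  refine (mem_iff_freeDegree_eq_zero_and_dvd hp).2 ⟨by rw [map_nsmul, hw, smul_zero], fun i => ?_⟩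
  rw [Prod.smul_fst, Pi.smul_apply, nsmul_eq_mul]
  exact (Int.natCast_dvd_natCast.2 (Finset.dvd_prod_of_mem p (Finset.mem_univ i))).mul_right _

end GLrels

namespace GLgroup

variable {n : ℕ} {p : Fin n → ℕ}

/-- The degree map `𝕃 → ℚ` with `x⃗_i ↦ 1 / p i` and `c⃗ ↦ 1`. -/
def degree (hp : ∀ i, 0 < p i) : GLgroup n p →+ ℚ :=
  QuotientAddGroup.lift (GLrels n p) (freeDegree p)
    fun _ hw => ((GLrels.mem_iff_freeDegree_eq_zero_and_dvd hp).1 hw).1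

theorem degree_mk (hp : ∀ i, 0 < p i) (w : (Fin n → ℤ) × ℤ) :
    degree hp (w : GLgroup n p) = freeDegree p w :=
  rfl

theorem degree_ne_zero (hp : ∀ i, 0 < p i) : degree hp ≠ 0 := fun h => by
  have hc : degree hp (((0, 1) : (Fin n → ℤ) × ℤ) : GLgroup n p) = 1 := by
    simp [degree_mk, freeDegree_apply]
  simp [h] at hc

theorem degree_eq_zero_iff_exists_nsmul_eq_zero (hp : ∀ i, 0 < p i) (x : GLgroup n p) :
    degree hp x = 0 ↔ ∃ m : ℕ, 0 < m ∧ m • x = 0 := by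
  constructor
  · obtain ⟨w, rfl⟩ := QuotientAddGroup.mk_surjective x
    exact fun hw => ⟨∏ i, p i, Finset.prod_pos fun i _ => hp i,
      (QuotientAddGroup.eq_zero_iff _).2 (GLrels.prod_nsmul_mem hp hw)⟩
  · rintro ⟨m, hm, hmx⟩
    have hdeg : m • degree hp x = 0 := by rw [← map_nsmul, hmx, map_zero]
    exact (smul_eq_zero.1 hdeg).resolve_left hm.ne'

theorem rank_eq_one (hp : ∀ i, 0 < p i) : Module.rank ℤ (GLgroup n p) = 1 := by
  have hne : (degree hp).toIntLinearMap ≠ 0 := fun h =>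
    degree_ne_zero hp (AddMonoidHom.ext fun x => DFunLike.congr_fun h x)
  refine rank_eq_one_of_ker_le_torsion hne fun x hx => ?_
  obtain ⟨m, hm, hmx⟩ := (degree_eq_zero_iff_exists_nsmul_eq_zero hp x).1 hx
  exact (Submodule.mem_torsion_iff x).2
    ⟨⟨m, mem_nonZeroDivisors_of_ne_zero (Nat.cast_ne_zero.2 hm.ne')⟩,
      (natCast_zsmul x m).trans hmx⟩

theorem degree_injective_of_pairwise_coprime (hp : ∀ i, 0 < p i)
    (hcoprime : ∀ i j, i ≠ j → (p i).Coprime (p j)) : Function.Injective (degree hp) := by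
  refine (injective_iff_map_eq_zero _).2 fun x hx => ?_
  obtain ⟨w, rfl⟩ := QuotientAddGroup.mk_surjective x
  refine (QuotientAddGroup.eq_zero_iff w).2 <|
    (GLrels.mem_iff_freeDegree_eq_zero_and_dvd hp).2 ⟨hx, fun i => ?_⟩
  have hsum : ∑ i, (w.1 i : ℚ) / p i = (-w.2 : ℤ) := by
    rw [Int.cast_neg]
    exact eq_neg_of_add_eq_zero_left hx
  refine dvd_of_isInteger_sum_div (K := ℚ) (p := fun i => (p i : ℤ)) (s := Finset.univ)
    (fun j _ => Nat.cast_ne_zero.2 (hp j).ne') (Finset.mem_univ i)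
    (fun j _ hij => Nat.isCoprime_iff_coprime.2 (hcoprime i j hij)) ⟨-w.2, ?_⟩
  simpa using hsum.symm

theorem coprime_of_degree_injective (hp : ∀ i, 0 < p i)
    (hinj : Function.Injective (degree hp)) {i j : Fin n} (hij : i ≠ j) :
    (p i).Coprime (p j) := by
  set g := (p i).gcd (p j)
  have hdegree (l : Fin n) (hl : g ∣ p l) :
      degree hp ((Pi.single l ((p l / g : ℕ) : ℤ), 0) : (Fin n → ℤ) × ℤ) = 1 / g := by
    have hpl : (p l : ℚ) ≠ 0 := Nat.cast_ne_zero.2 (hp l).ne'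
    rw [degree_mk, freeDegree_single, Int.cast_natCast, Nat.cast_div_charZero hl, Int.cast_zero,
      add_zero, div_div_cancel_left' hpl, one_div]
  have hi : g ∣ p i := Nat.gcd_dvd_left _ _
  have hmem := QuotientAddGroup.eq.1 <|
    hinj ((hdegree i hi).trans (hdegree j (Nat.gcd_dvd_right _ _)).symm)
  have hdvd : p i ∣ p i / g := Int.natCast_dvd_natCast.1 <| by
    simpa [hij] using ((GLrels.mem_iff_freeDegree_eq_zero_and_dvd hp).1 hmem).2 i
  have hdiv : p i / g = p i := Nat.dvd_antisymm (Nat.div_dvd_of_dvd hi) hdvd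
  exact (Nat.div_eq_self.1 hdiv).resolve_left (hp i).ne'

theorem degree_injective_iff_pairwise_coprime (hp : ∀ i, 0 < p i) :
    Function.Injective (degree hp) ↔ ∀ i j, i ≠ j → (p i).Coprime (p j) :=
  ⟨fun hinj _ _ => coprime_of_degree_injective hp hinj, degree_injective_of_pairwise_coprime hp⟩

end GLgroup

/-- `𝕃` has rank one, i.e. `ℚ ⊗_ℤ 𝕃` is a one-dimensional `ℚ`-vector
space; moreover `𝕃` is torsion-free if and only if `p_1, …, p_n` are pairwise coprime. -/
theorem rank_one_and_torsionfree_iff_coprime (d n : ℕ) (hd : 1 ≤ d)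
    (p : Fin n → ℕ) (hp : ∀ i, 0 < p i) :
    Module.rank ℚ (ℚ ⊗[ℤ] GLgroup n p) = 1 ∧
      ((∀ x : GLgroup n p, (∃ m : ℕ, 0 < m ∧ m • x = 0) → x = 0) ↔
        ∀ i j : Fin n, i ≠ j → Nat.Coprime (p i) (p j)) := by
  constructor
  · rw [(TensorProduct.isBaseChange ℤ (GLgroup n p) ℚ).rank_eq, GLgroup.rank_eq_one hp]
  · simp only [← GLgroup.degree_eq_zero_iff_exists_nsmul_eq_zero hp]
    rw [← injective_iff_map_eq_zero, GLgroup.degree_injective_iff_pairwise_coprime hp]
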